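/- arXiv:1101.0313 — 2 statements merged into one kernel-verified Lean document; each statement's English description precedes it below -/
import Mathlib

section
/- Let a < b be reals and G : [a,b] → ℝ a Lipschitz function with G(a) = a and G(b) = b. Then for every Lipschitz function f : ℝ → ℝ, ∫_a^b f(G(x))·G′(x) dx = ∫_a^b f(y) dy, where G′ is the (almost everywhere defined) derivative of G and the integrals are with respect to Lebesgue measure. (This is the dual formulation, against all Lipschitz 1-forms f dy, of the statement G_*([a,b]) = [a,b] as differential chains, the 1-dimensional case of the General Intermediate Value Theorem.) -/
noncomputable section

/-- General Intermediate Value Theorem in dimension one, dual formulation: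
if `G : [a,b] → ℝ` is Lipschitz with `G(a) = a` and `G(b) = b`, then for every Lipschitz
`f : ℝ → ℝ`, `∫_a^b f(G(x)) G'(x) dx = ∫_a^b f(y) dy`. -/
theorem statement15 (a b : ℝ) (hab : a < b) (G : ℝ → ℝ) (K : NNReal)
    (hG : LipschitzOnWith K G (Set.Icc a b)) (hGa : G a = a) (hGb : G b = b)
    (f : ℝ → ℝ) (L : NNReal) (hf : LipschitzWith L f) :
    ∫ x in a..b, f (G x) * deriv G x = ∫ y in a..b, f y := by
  have hfc : Continuous f := hf.continuous
  set F : ℝ → ℝ := fun x => ∫ y in a..x, f y with hF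
  have hFd : ∀ x, HasDerivAt F (f x) x := fun x => hfc.integral_hasStrictDerivAt a x |>.hasDerivAt
  have hFC : ContDiff ℝ 1 F := by
    rw [contDiff_one_iff_deriv]
    refine ⟨fun x => (hFd x).differentiableAt, ?_⟩
    have : deriv F = f := funext fun x => (hFd x).deriv
    rwa [this]
  obtain ⟨r, hr⟩ := (isCompact_Icc.image_of_continuousOn hG.continuousOn).isBounded.subset_closedBall 0
  obtain ⟨M, hM⟩ := hFC.contDiffOn.exists_lipschitzOnWith (s := Metric.closedBall (0:ℝ) r)
    (by decide) (convex_closedBall _ _) (isCompact_closedBall _ _)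
  have hlip : LipschitzOnWith (M * K) (F ∘ G) (Set.uIcc a b) := by
    rw [Set.uIcc_of_le hab.le]
    exact hM.comp hG (fun x hx => hr ⟨x, hx, rfl⟩)
  have h1 := hlip.absolutelyContinuousOnInterval.integral_deriv_eq_sub
  have hGac : AbsolutelyContinuousOnInterval G a b :=
    LipschitzOnWith.absolutelyContinuousOnInterval (K := K) (by rwa [Set.uIcc_of_le hab.le])
  have h2 : ∫ x in a..b, f (G x) * deriv G x = ∫ x in a..b, deriv (F ∘ G) x := by
    apply intervalIntegral.integral_congr_ae
    filter_upwards [hGac.ae_differentiableAt] with x hx hxm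
    exact (((hFd (G x)).comp x (hx (Set.uIoc_subset_uIcc hxm)).hasDerivAt).deriv).symm
  rw [h2, h1]
  simp [hF, hGa, hGb]
end
end

section
/- Let B ⊆ ℝⁿ be the closed unit ball and G : B → ℝⁿ a Lipschitz map such that G(x) = x for every x with ‖x‖ = 1. Then for every bounded Lipschitz function f : ℝⁿ → ℝ, ∫_B f(G(x))·det(DG(x)) dx = ∫_B f(y) dy, where DG is the (Lebesgue-almost everywhere defined) total derivative of G and the integrals are with respect to Lebesgue measure. (This is the dual formulation, against all n-forms f dV of class B¹, of the statement G_*(B̃) = B̃ as differential chains, a consequence of the General Intermediate Value Theorem strengthening the classical fact that the image of such a map contains B.) -/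
noncomputable section

/-- Euclidean space `ℝⁿ`. -/
abbrev Euc (n : ℕ) := EuclideanSpace ℝ (Fin n)

open MeasureTheory Metric Set

/-- the displacement extended by zero outside the ball is Lipschitz -/
lemma aux_ext_lip (n : ℕ) (u : Euc n → Euc n) (C : NNReal)
    (hu : LipschitzOnWith C u (closedBall (0 : Euc n) 1))
    (hs : ∀ x : Euc n, ‖x‖ = 1 → u x = 0) :
    LipschitzWith C ((closedBall (0 : Euc n) 1).indicator u) := by
  classical
  have key : ∀ x y : Euc n, x ∈ closedBall (0 : Euc n) 1 → y ∉ closedBall (0 : Euc n) 1 →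
      dist (u x) 0 ≤ C * dist x y := by
    intro x y hx hy
    have hc : ContinuousOn (fun s : ℝ => ‖AffineMap.lineMap x y s‖) (Icc 0 1) := by
      apply Continuous.continuousOn
      exact (AffineMap.lineMap_continuous).norm
    have := intermediate_value_Icc (zero_le_one) hc
    have h1 : (1 : ℝ) ∈ Icc (‖AffineMap.lineMap x y (0 : ℝ)‖) (‖AffineMap.lineMap x y (1 : ℝ)‖) := by
      simp only [AffineMap.lineMap_apply_zero, AffineMap.lineMap_apply_one]
      simp only [mem_closedBall, dist_zero_right, not_le] at hx hy
      exact ⟨hx, hy.le⟩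
    obtain ⟨s, hs01, hs1⟩ := this h1
    simp only at hs1
    have hz := hs _ hs1
    have hzB : AffineMap.lineMap x y s ∈ closedBall (0 : Euc n) 1 := by
      simp [hs1]
    have h2 := hu.dist_le_mul x hx _ hzB
    rw [hz] at h2
    refine h2.trans ?_
    gcongr
    rw [dist_left_lineMap]
    have : ‖s‖ ≤ 1 := by rw [Real.norm_eq_abs, abs_of_nonneg hs01.1]; exact hs01.2
    nlinarith [dist_nonneg (x := x) (y := y)]
  refine LipschitzWith.of_dist_le_mul fun x y => ?_
  by_cases hx : x ∈ closedBall (0 : Euc n) 1 <;> by_cases hy : y ∈ closedBall (0 : Euc n) 1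
  · rw [indicator_of_mem hx, indicator_of_mem hy]; exact hu.dist_le_mul x hx y hy
  · rw [indicator_of_mem hx, indicator_of_notMem hy]; exact key x y hx hy
  · rw [indicator_of_notMem hx, indicator_of_mem hy, dist_comm, dist_comm x]; exact key y x hy hx
  · rw [indicator_of_notMem hx, indicator_of_notMem hy]; simp; positivity

/-- small perturbations of the identity preserve the ball -/
lemma aux_image (n : ℕ) (u : Euc n → Euc n) (C : NNReal)
    (hu : LipschitzOnWith C u (closedBall (0 : Euc n) 1))
    (hs : ∀ x : Euc n, ‖x‖ = 1 → u x = 0) (hC : C < 1) :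
    InjOn (fun x => x + u x) (closedBall (0 : Euc n) 1) ∧
      (fun x => x + u x) '' (closedBall (0 : Euc n) 1) = closedBall (0 : Euc n) 1 := by
  have hU := aux_ext_lip n u C hu hs
  set U := (closedBall (0 : Euc n) 1).indicator u with hUdef
  have hin : ∀ x ∈ closedBall (0 : Euc n) 1, U x = u x := fun x hx => indicator_of_mem hx u
  have hout : ∀ x, x ∉ closedBall (0 : Euc n) 1 → U x = 0 := fun x hx => indicator_of_notMem hx u
  have hinj : Function.Injective (fun x => x + U x) := by
    intro x y hxy
    simp only at hxy
    have h1 := hU.dist_le_mul x y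
    have h2 : dist (U x) (U y) = dist x y := by
      rw [dist_eq_norm, dist_eq_norm, ← norm_neg]
      congr 1
      have : x - y = U y - U x := by
        rw [sub_eq_sub_iff_add_eq_add, hxy, add_comm]
      rw [this]; abel
    rw [h2] at h1
    have hC' : (C : ℝ) < 1 := by exact_mod_cast hC
    have : dist x y = 0 := by nlinarith [dist_nonneg (x := x) (y := y)]
    exact dist_eq_zero.1 this
  have hsurj : Function.Surjective (fun x => x + U x) := by
    intro y
    have hc : ContractingWith C (fun x => y - U x) := by
      refine ⟨hC, LipschitzWith.of_dist_le_mul fun a b => ?_⟩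
      rw [dist_sub_left]
      exact hU.dist_le_mul a b
    refine ⟨hc.fixedPoint, ?_⟩
    have := hc.fixedPoint_isFixedPt
    simp only [Function.IsFixedPt] at this
    simp only
    nth_rewrite 1 [← this]
    simp
  constructor
  · intro x hx y hy hxy
    apply hinj
    simp only at hxy ⊢
    rw [hin x hx, hin y hy, hxy]
  · ext y
    constructor
    · rintro ⟨x, hx, rfl⟩
      by_contra hy
      simp only at hy
      have : x + u x = x := by
        apply hinj
        simp only
        rw [hout _ hy, hin x hx, add_zero]
      rw [this] at hy
      exact hy hx
    · intro hy
      obtain ⟨x, hx⟩ := hsurj y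
      simp only at hx
      by_cases hxB : x ∈ closedBall (0 : Euc n) 1
      · exact ⟨x, hxB, by simp only; rw [← hin x hxB, hx]⟩
      · rw [hout x hxB, add_zero] at hx
        exact absurd (hx ▸ hy) hxB

/-- determinant of a small perturbation of the identity is positive -/
lemma aux_det_pos (n : ℕ) (A : Euc n →L[ℝ] Euc n) (hA : ‖A‖ < 1) :
    0 < (ContinuousLinearMap.id ℝ (Euc n) + A).det := by
  have hne : ∀ s ∈ Icc (0 : ℝ) 1, (ContinuousLinearMap.id ℝ (Euc n) + s • A).det ≠ 0 := by
    intro s hs h0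
    have h1 : LinearMap.det ((ContinuousLinearMap.id ℝ (Euc n) + s • A : Euc n →L[ℝ] Euc n) : Euc n →ₗ[ℝ] Euc n) = 0 := h0
    obtain ⟨v, hv, hv0⟩ := (Submodule.ne_bot_iff _).1 (LinearMap.bot_lt_ker_of_det_eq_zero h1).ne'
    have h2 : v + s • A v = 0 := by simpa using hv
    have h3 : ‖v‖ = ‖s • A v‖ := by
      have := congrArg norm (eq_neg_of_add_eq_zero_left h2)
      rwa [norm_neg] at this
    have h4 : ‖s • A v‖ ≤ ‖A‖ * ‖v‖ := by
      rw [norm_smul, Real.norm_eq_abs, abs_of_nonneg hs.1]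
      have := A.le_opNorm v
      nlinarith [hs.2, hs.1, norm_nonneg (A v)]
    have h5 : 0 < ‖v‖ := norm_pos_iff.2 hv0
    nlinarith
  have hcont : ContinuousOn (fun s : ℝ => (ContinuousLinearMap.id ℝ (Euc n) + s • A).det) (Icc 0 1) := by
    apply Continuous.continuousOn
    exact ContinuousLinearMap.continuous_det.comp (by fun_prop)
  by_contra hneg
  have := intermediate_value_Icc' zero_le_one hcont
  have h0 : (0 : ℝ) ∈ Icc ((ContinuousLinearMap.id ℝ (Euc n) + (1 : ℝ) • A).det)
      ((ContinuousLinearMap.id ℝ (Euc n) + (0 : ℝ) • A).det) := by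
    constructor
    · rw [one_smul]; exact not_lt.1 hneg
    · have h00 : ContinuousLinearMap.id ℝ (Euc n) + (0 : ℝ) • A = ContinuousLinearMap.id ℝ (Euc n) := by
        ext v; simp
      rw [h00]
      simp [ContinuousLinearMap.det]
  obtain ⟨s, hs, hs0⟩ := this h0
  exact hne s hs hs0

lemma aux_null (n : ℕ) (T : Euc n → Euc n) (C : NNReal) (N : Set (Euc n))
    (hT : LipschitzOnWith C T N) (hN : volume N = 0) : volume (T '' N) = 0 := by
  have h1 := hT.hausdorffMeasure_image_le (d := (n : ℝ)) (by positivity)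
  have hH : (μH[(n : ℝ)] : Measure (Euc n)).IsAddHaarMeasure := by
    simpa using MeasureTheory.isAddHaarMeasure_hausdorffMeasure (E := EuclideanSpace ℝ (Fin n))
  have h2 : (μH[(n : ℝ)] : Measure (Euc n)) N = 0 :=
    Measure.absolutelyContinuous_isAddHaarMeasure _ _ hN
  rw [h2, mul_zero] at h1
  exact Measure.absolutelyContinuous_isAddHaarMeasure volume μH[(n : ℝ)] (le_antisymm h1 bot_le)

/-- good points -/
def goodS (n : ℕ) (G : Euc n → Euc n) : Set (Euc n) :=
  ball (0 : Euc n) 1 ∩ {x | DifferentiableAt ℝ G x}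

lemma goodS_meas (n : ℕ) (G : Euc n → Euc n) : MeasurableSet (goodS n G) :=
  isOpen_ball.measurableSet.inter (measurableSet_of_differentiableAt ℝ G)

lemma goodS_sub (n : ℕ) (G : Euc n → Euc n) : goodS n G ⊆ closedBall (0 : Euc n) 1 :=
  fun _ hx => ball_subset_closedBall hx.1

lemma goodS_null (n : ℕ) (G : Euc n → Euc n) (K : NNReal)
    (hG : LipschitzOnWith K G (closedBall (0 : Euc n) 1)) :
    volume (closedBall (0 : Euc n) 1 \ goodS n G) = 0 := by
  have h1 := hG.ae_differentiableWithinAt_of_mem (μ := volume)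
  have h2 : volume (sphere (0 : Euc n) 1) = 0 :=
    Measure.addHaar_sphere_of_ne_zero volume _ one_ne_zero
  have h3 : volume ({x | ¬ (x ∈ closedBall (0 : Euc n) 1 →
      DifferentiableWithinAt ℝ G (closedBall (0 : Euc n) 1) x)} ∪ sphere (0 : Euc n) 1) = 0 :=
    measure_union_null h1 h2
  refine measure_mono_null ?_ h3
  rintro x ⟨hx, hxS⟩
  by_cases hsp : x ∈ sphere (0 : Euc n) 1
  · exact Or.inr hsp
  · left
    intro hd
    apply hxS
    have hb : x ∈ ball (0 : Euc n) 1 := by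
      simp only [mem_closedBall, mem_sphere, mem_ball] at *
      exact lt_of_le_of_ne hx hsp
    exact ⟨hb, (hd hx).differentiableAt (mem_nhds_iff.2 ⟨_, ball_subset_closedBall, isOpen_ball, hb⟩)⟩

lemma aux_small (n : ℕ) (G : Euc n → Euc n) (K : NNReal)
    (hG : LipschitzOnWith K G (closedBall (0 : Euc n) 1))
    (hGsphere : ∀ x : Euc n, ‖x‖ = 1 → G x = x)
    (t : NNReal) (ht : t * (K + 1) < 1) (p : Euc n → ℝ) (hp : Continuous p) :
    IntegrableOn (fun x => p (x + (t : ℝ) • (G x - x)) *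
        (ContinuousLinearMap.id ℝ (Euc n) + (t : ℝ) • (fderiv ℝ G x - ContinuousLinearMap.id ℝ (Euc n))).det)
        (goodS n G) ∧
    ∫ x in goodS n G, p (x + (t : ℝ) • (G x - x)) *
        (ContinuousLinearMap.id ℝ (Euc n) + (t : ℝ) • (fderiv ℝ G x - ContinuousLinearMap.id ℝ (Euc n))).det
      = ∫ y in closedBall (0 : Euc n) 1, p y := by
  have hu : LipschitzOnWith (t * (K + 1)) (fun x => (t : ℝ) • (G x - x)) (closedBall (0 : Euc n) 1) := by
    refine LipschitzOnWith.of_dist_le_mul fun x hx y hy => ?_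
    rw [dist_smul₀]
    have h1 := hG.dist_le_mul x hx y hy
    have h2 := dist_sub_sub_le (G x) x (G y) y
    push_cast
    rw [Real.norm_eq_abs, abs_of_nonneg (NNReal.coe_nonneg t), mul_assoc]
    have := t.2
    gcongr
    linarith
  obtain ⟨hinj, himg⟩ := aux_image n _ _ hu (fun x hx => by simp [hGsphere x hx]) ht
  set T : Euc n → Euc n := fun x => x + (t : ℝ) • (G x - x) with hT
  set T' : Euc n → (Euc n →L[ℝ] Euc n) := fun x => ContinuousLinearMap.id ℝ (Euc n) +
    (t : ℝ) • (fderiv ℝ G x - ContinuousLinearMap.id ℝ (Euc n)) with hT'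
  have hder : ∀ x ∈ goodS n G, HasFDerivWithinAt T (T' x) (goodS n G) x := by
    intro x hx
    have := hx.2.hasFDerivAt
    exact ((hasFDerivAt_id x).add ((this.sub (hasFDerivAt_id x)).const_smul (t : ℝ))).hasFDerivWithinAt
  have hpos : ∀ x ∈ goodS n G, 0 < (T' x).det := by
    intro x hx
    apply aux_det_pos
    have hn : closedBall (0 : Euc n) 1 ∈ nhds x :=
      mem_nhds_iff.2 ⟨_, ball_subset_closedBall, isOpen_ball, hx.1⟩
    have h1 := norm_fderiv_le_of_lipschitzOn ℝ hn hG
    have h2 : ‖fderiv ℝ G x - ContinuousLinearMap.id ℝ (Euc n)‖ ≤ K + 1 :=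
      (norm_sub_le _ _).trans (add_le_add h1 ContinuousLinearMap.norm_id_le)
    rw [norm_smul, Real.norm_eq_abs, abs_of_nonneg (NNReal.coe_nonneg t)]
    have ht' : (t : ℝ) * (K + 1) < 1 := by exact_mod_cast ht
    exact lt_of_le_of_lt (mul_le_mul_of_nonneg_left h2 t.2) ht'
  have hinjS : InjOn T (goodS n G) := hinj.mono (goodS_sub n G)
  have hTL : LipschitzOnWith (1 + t * (K + 1)) T (closedBall (0 : Euc n) 1) :=
    (LipschitzWith.id.lipschitzOnWith).add hu
  have hnull : volume (T '' (closedBall (0 : Euc n) 1 \ goodS n G)) = 0 :=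
    aux_null n T _ _ (hTL.mono sdiff_subset) (goodS_null n G K hG)
  have hae : (T '' goodS n G : Set (Euc n)) =ᵐ[volume] closedBall (0 : Euc n) 1 := by
    rw [← himg]
    refine Filter.EventuallyLE.antisymm (LE.le.eventuallyLE (image_mono (goodS_sub n G))) ?_
    rw [ae_le_set]
    exact measure_mono_null (subset_image_diff _ _ _) hnull
  have hpi : IntegrableOn p (T '' goodS n G) := by
    have : IntegrableOn p (closedBall (0 : Euc n) 1) :=
      hp.continuousOn.integrableOn_compact (isCompact_closedBall _ _)
    exact this.congr_set_ae hae
  have hcongr : ∀ x ∈ goodS n G, |(T' x).det| • p (T x) = p (T x) * (T' x).det := by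
    intro x hx
    rw [abs_of_pos (hpos x hx), smul_eq_mul, mul_comm]
  constructor
  · have := (integrableOn_image_iff_integrableOn_abs_det_fderiv_smul volume (goodS_meas n G) hder hinjS p).1 hpi
    exact this.congr_fun hcongr (goodS_meas n G)
  · rw [← setIntegral_congr_set hae,
      integral_image_eq_integral_abs_det_fderiv_smul volume (goodS_meas n G) hder hinjS p]
    exact (setIntegral_congr_fun (goodS_meas n G) hcongr).symm

open Polynomial in
lemma aux_det_poly (n : ℕ) (A : Euc n →L[ℝ] Euc n) :
    ∃ q : ℝ[X], q.natDegree ≤ n ∧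
      ∀ t : ℝ, q.eval t = (ContinuousLinearMap.id ℝ (Euc n) + t • A).det := by
  let b := (EuclideanSpace.basisFun (Fin n) ℝ).toBasis
  let M := LinearMap.toMatrix b b (A : Euc n →ₗ[ℝ] Euc n)
  refine ⟨((X : ℝ[X]) • M.map C + (1 : Matrix (Fin n) (Fin n) ℝ).map C).det, ?_, fun t => ?_⟩
  · simpa using Polynomial.natDegree_det_X_add_C_le M 1
  · have : (ContinuousLinearMap.id ℝ (Euc n) + t • A).det = (t • M + 1).det := by
      rw [ContinuousLinearMap.det, ← LinearMap.det_toMatrix b]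
      congr 1
      simp [M, add_comm, LinearMap.toMatrix_id]
    rw [this, ← Polynomial.coe_evalRingHom, RingHom.map_det]
    congr 1
    ext i j
    simp [Matrix.one_apply]
    split_ifs <;> simp [mul_comm]

open Polynomial in
lemma aux_mv_poly (n : ℕ) (P : MvPolynomial (Fin n) ℝ) (x u : Euc n) :
    ∃ q : ℝ[X], q.natDegree ≤ P.totalDegree ∧
      ∀ t : ℝ, q.eval t = MvPolynomial.eval (fun i => (x + t • u) i) P := by
  refine ⟨MvPolynomial.aeval (fun i => C (u i) * X + C (x i)) P, ?_, fun t => ?_⟩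
  · have := MvPolynomial.aeval_natDegree_le P le_rfl (fun i => C (u i) * X + C (x i)) (n := 1)
      (fun i => natDegree_linear_le)
    simpa using this
  · rw [← Polynomial.coe_evalRingHom, MvPolynomial.aeval_def, MvPolynomial.eval₂_eq,
      MvPolynomial.eval_eq]
    rw [map_sum]
    refine Finset.sum_congr rfl fun d _ => ?_
    rw [map_mul, map_prod]
    congr 1
    · simp
    · refine Finset.prod_congr rfl fun i _ => ?_
      simp
      ring

open Polynomial in
lemma aux_poly (n : ℕ) (G : Euc n → Euc n) (K : NNReal)
    (hG : LipschitzOnWith K G (closedBall (0 : Euc n) 1))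
    (hGsphere : ∀ x : Euc n, ‖x‖ = 1 → G x = x)
    (P : MvPolynomial (Fin n) ℝ) :
    IntegrableOn (fun x => MvPolynomial.eval (fun i => G x i) P * (fderiv ℝ G x).det) (goodS n G) ∧
    ∫ x in goodS n G, MvPolynomial.eval (fun i => G x i) P * (fderiv ℝ G x).det
      = ∫ y in closedBall (0 : Euc n) 1, MvPolynomial.eval (fun i => y i) P := by
  set N := P.totalDegree + n with hN
  let v : ℕ → NNReal := fun i => ((K + 2) * (i + 1))⁻¹
  let v' : ℕ → ℝ := fun i => (v i : ℝ)
  have hv : ∀ i, v i * (K + 1) < 1 := by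
    intro i
    rw [inv_mul_lt_iff₀ (by positivity), mul_one]
    calc K + 1 < K + 2 := by gcongr; norm_num
      _ = (K + 2) * 1 := by rw [mul_one]
      _ ≤ (K + 2) * (i + 1) := by gcongr; simp
  have hinj : InjOn v' (Finset.range (N + 1) : Finset ℕ) := by
    intro i _ j _ hij
    have h1 : v i = v j := NNReal.coe_injective hij
    have h2 := inv_injective h1
    have h3 := mul_left_cancel₀ (by positivity) h2
    exact_mod_cast add_right_cancel h3
  let c : ℕ → ℝ := fun i => (Lagrange.basis (Finset.range (N + 1)) v' i).eval 1
  have hc : ∑ i ∈ Finset.range (N + 1), c i = 1 := by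
    have := congrArg (Polynomial.eval 1) (Lagrange.sum_basis hinj ⟨0, by simp⟩)
    simpa [Polynomial.eval_finsetSum] using this
  have hinterp : ∀ q : ℝ[X], q.natDegree ≤ N →
      q.eval 1 = ∑ i ∈ Finset.range (N + 1), c i * q.eval (v' i) := by
    intro q hq
    have hd : q.degree < (Finset.range (N + 1)).card := by
      rw [Finset.card_range]
      exact lt_of_le_of_lt (Polynomial.degree_le_of_natDegree_le hq) (by exact_mod_cast Nat.lt_succ_self N)
    have := congrArg (Polynomial.eval 1) (Lagrange.eq_interpolate hinj hd)
    rw [this, Lagrange.interpolate_apply, Polynomial.eval_finsetSum]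
    refine Finset.sum_congr rfl fun i _ => ?_
    simp [c, mul_comm]
  have hpc : Continuous (fun y : Euc n => MvPolynomial.eval (fun i => y i) P) := by
    have := MvPolynomial.continuous_eval P
    exact this.comp (by fun_prop)
  have hk := fun i => aux_small n G K hG hGsphere (v i) (hv i) _ hpc
  have hpt : ∀ x, MvPolynomial.eval (fun i => G x i) P * (fderiv ℝ G x).det =
      ∑ i ∈ Finset.range (N + 1), c i *
        (MvPolynomial.eval (fun j => (x + (v i : ℝ) • (G x - x)) j) P *
        (ContinuousLinearMap.id ℝ (Euc n) + (v i : ℝ) • (fderiv ℝ G x - ContinuousLinearMap.id ℝ (Euc n))).det) := by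
    intro x
    obtain ⟨q₁, hq₁, hq₁e⟩ := aux_mv_poly n P x (G x - x)
    obtain ⟨q₂, hq₂, hq₂e⟩ := aux_det_poly n (fderiv ℝ G x - ContinuousLinearMap.id ℝ (Euc n))
    have := hinterp (q₁ * q₂) (Polynomial.natDegree_mul_le.trans (add_le_add hq₁ hq₂))
    simp only [Polynomial.eval_mul, hq₁e, hq₂e, v'] at this
    rw [← this]
    simp
  simp_rw [hpt]
  constructor
  · exact integrable_finsetSum _ fun i _ => (hk i).1.const_mul (c i)
  · rw [integral_finsetSum _ fun i _ => (hk i).1.const_mul (c i)]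
    simp_rw [integral_const_mul]
    rw [Finset.sum_congr rfl fun i _ => by rw [(hk i).2], ← Finset.sum_mul, hc, one_mul]

lemma aux_sw (n : ℕ) (f : Euc n → ℝ) (hf : Continuous f) (Q : Set (Euc n)) (hQ : IsCompact Q)
    (ε : ℝ) (hε : 0 < ε) :
    ∃ P : MvPolynomial (Fin n) ℝ, ∀ y ∈ Q, |MvPolynomial.eval (fun i => y i) P - f y| < ε := by
  let φ : MvPolynomial (Fin n) ℝ →ₐ[ℝ] C(Euc n, ℝ) :=
    MvPolynomial.aeval (fun i => (⟨fun y => y i, by fun_prop⟩ : C(Euc n, ℝ)))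
  have hφ : ∀ P y, φ P y = MvPolynomial.eval (fun i => y i) P := by
    intro P y
    induction P using MvPolynomial.induction_on with
    | C a => simp [φ]
    | add p q hp hq => simp [hp, hq]
    | mul_X p i hp => simp [hp]; left; simp [φ]
  have hsep : (φ.range).SeparatesPoints := by
    intro x y hxy
    obtain ⟨i, hi⟩ : ∃ i, x i ≠ y i := by
      by_contra! h
      exact hxy (by ext i; exact h i)
    refine ⟨_, ⟨φ (MvPolynomial.X i), ⟨_, rfl⟩, rfl⟩, ?_⟩
    simpa [hφ] using hi
  obtain ⟨g, ⟨P, rfl⟩, hg⟩ :=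
    ContinuousMap.exists_mem_subalgebra_near_continuous_of_isCompact_of_separatesPoints
      hsep ⟨f, hf⟩ hQ hε
  refine ⟨P, fun y hy => ?_⟩
  have := hg y hy
  rw [← hφ]
  exact this

/-- General Intermediate Value Theorem, dual formulation: if `G` is a
Lipschitz self-map of the closed unit ball `B ⊆ ℝⁿ` fixing the unit sphere pointwise, then for
every bounded Lipschitz `f : ℝⁿ → ℝ`, `∫_B f(G(x)) det(DG(x)) dx = ∫_B f(y) dy`. -/
theorem statement16 (n : ℕ) (G : Euc n → Euc n) (K : NNReal)
    (hG : LipschitzOnWith K G (Metric.closedBall (0 : Euc n) 1))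
    (hGsphere : ∀ x : Euc n, ‖x‖ = 1 → G x = x)
    (f : Euc n → ℝ) (L : NNReal) (hf : LipschitzWith L f)
    (M : ℝ) (hfbd : ∀ y : Euc n, |f y| ≤ M) :
    ∫ x in Metric.closedBall (0 : Euc n) 1,
        f (G x) * LinearMap.det (fderiv ℝ G x : Euc n →ₗ[ℝ] Euc n) =
      ∫ y in Metric.closedBall (0 : Euc n) 1, f y := by
  have hae : (goodS n G : Set (Euc n)) =ᵐ[volume] closedBall (0 : Euc n) 1 := by
    refine Filter.EventuallyLE.antisymm (LE.le.eventuallyLE (goodS_sub n G)) ?_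
    rw [ae_le_set]
    exact goodS_null n G K hG
  rw [← setIntegral_congr_set hae]
  change ∫ x in goodS n G, f (G x) * (fderiv ℝ G x).det = _
  have hdet : IntegrableOn (fun x => (fderiv ℝ G x).det) (goodS n G) := by
    simpa using (aux_poly n G K hG hGsphere 1).1
  have hfG : AEStronglyMeasurable (fun x => f (G x)) (volume.restrict (goodS n G)) :=
    ((hf.continuous.comp_continuousOn hG.continuousOn).mono
      (goodS_sub n G)).aestronglyMeasurable (goodS_meas n G)
  have hI : IntegrableOn (fun x => f (G x) * (fderiv ℝ G x).det) (goodS n G) :=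
    Integrable.bdd_mul hdet hfG (Filter.Eventually.of_forall fun x => hfbd (G x))
  have hJ : IntegrableOn f (closedBall (0 : Euc n) 1) :=
    hf.continuous.continuousOn.integrableOn_compact (isCompact_closedBall _ _)
  set D := ∫ x in goodS n G, |(fderiv ℝ G x).det| with hD
  have hD0 : 0 ≤ D := integral_nonneg fun x => abs_nonneg _
  set V := ∫ _ in closedBall (0 : Euc n) 1, (1 : ℝ) with hV
  have hV0 : 0 ≤ V := integral_nonneg fun x => zero_le_one
  have hQ : IsCompact (G '' closedBall (0 : Euc n) 1 ∪ closedBall (0 : Euc n) 1) :=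
    ((isCompact_closedBall _ _).image_of_continuousOn hG.continuousOn).union (isCompact_closedBall _ _)
  have hbound : ∀ ε > 0, |(∫ x in goodS n G, f (G x) * (fderiv ℝ G x).det) -
      ∫ y in closedBall (0 : Euc n) 1, f y| ≤ ε * (D + V) := by
    intro ε hε
    obtain ⟨P, hP⟩ := aux_sw n f hf.continuous _ hQ ε hε
    obtain ⟨hPi, hPe⟩ := aux_poly n G K hG hGsphere P
    have hpc : Continuous (fun y : Euc n => MvPolynomial.eval (fun i => y i) P) :=
      (MvPolynomial.continuous_eval P).comp (by fun_prop)
    have hPj : IntegrableOn (fun y : Euc n => MvPolynomial.eval (fun i => y i) P) (closedBall (0 : Euc n) 1) :=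
      hpc.continuousOn.integrableOn_compact (isCompact_closedBall _ _)
    have e1 : |(∫ x in goodS n G, MvPolynomial.eval (fun i => G x i) P * (fderiv ℝ G x).det) -
        ∫ x in goodS n G, f (G x) * (fderiv ℝ G x).det| ≤ ε * D := by
      rw [← integral_sub hPi hI, hD, ← integral_const_mul, ← Real.norm_eq_abs]
      refine norm_integral_le_of_norm_le (hdet.abs.const_mul ε) ?_
      refine (ae_restrict_iff' (goodS_meas n G)).2 (Filter.Eventually.of_forall fun x hx => ?_)
      rw [← sub_mul, norm_mul, Real.norm_eq_abs, Real.norm_eq_abs]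
      gcongr
      exact (hP _ (Or.inl ⟨x, goodS_sub n G hx, rfl⟩)).le
    have e2 : |(∫ y in closedBall (0 : Euc n) 1, MvPolynomial.eval (fun i => y i) P) -
        ∫ y in closedBall (0 : Euc n) 1, f y| ≤ ε * V := by
      rw [← integral_sub hPj hJ, hV, ← integral_const_mul, ← Real.norm_eq_abs]
      refine norm_integral_le_of_norm_le
        (continuousOn_const.integrableOn_compact (isCompact_closedBall _ _)) ?_
      refine (ae_restrict_iff' measurableSet_closedBall).2 (Filter.Eventually.of_forall fun x hx => ?_)
      rw [Real.norm_eq_abs, mul_one]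
      exact (hP _ (Or.inr hx)).le
    rw [hPe] at e1
    rw [abs_le] at *
    constructor <;> linarith [e1.1, e1.2, e2.1, e2.2]
  by_contra hne
  have hpos := abs_pos.2 (sub_ne_zero.2 hne)
  set δ := |(∫ x in goodS n G, f (G x) * (fderiv ℝ G x).det) -
      ∫ y in closedBall (0 : Euc n) 1, f y|
  have h := hbound (δ / (2 * (D + V + 1))) (by positivity)
  have h2 : δ / (2 * (D + V + 1)) * (D + V) < δ := by
    rw [div_mul_eq_mul_div, div_lt_iff₀ (by positivity)]
    nlinarith
  linarith
end
end
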